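/- For every n ≥ 2, the group K_n is generated by the 2n−2 elements α_{1n}, …, α_{n−1,n}, α_{n1}, …, α_{n,n−1}; that is, K_n equals the subgroup of PΣ_n generated by { α_{in}, α_{ni} : 1 ≤ i ≤ n−1 }. -/

import Mathlib

open FreeGroup

/-- The free group on `n` generators. -/
abbrev FG (n : ℕ) : Type := FreeGroup (Fin n)

/-- The pure symmetric automorphism group `PΣ_n`: automorphisms sending each
generator to a conjugate of itself. -/
def PSigmaAut (n : ℕ) : Subgroup (MulAut (FG n)) where
  carrier := {φ | ∀ i : Fin n, ∃ w : FG n, φ (of i) = w * of i * w⁻¹}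
  one_mem' := fun i => ⟨1, by simp⟩
  mul_mem' := by
    rintro φ ψ hφ hψ i
    obtain ⟨w, hw⟩ := hψ i
    obtain ⟨v, hv⟩ := hφ i
    refine ⟨φ w * v, ?_⟩
    simp only [MulAut.mul_apply, hw, _root_.map_mul, _root_.map_inv, hv, mul_inv_rev, mul_assoc]
  inv_mem' := by
    intro φ hφ i
    obtain ⟨w, hw⟩ := hφ i
    refine ⟨(φ⁻¹ w)⁻¹, ?_⟩
    refine φ.injective ?_
    simp only [MulAut.apply_inv_self, _root_.map_mul, _root_.map_inv, inv_inv, hw]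
    group

/-- The projection `F_n → F_{n-1}` sending `x_n ↦ 1` and `x_i ↦ x_i` for `i < n-1`. -/
def projHom (n : ℕ) : FG n →* FG (n - 1) :=
  FreeGroup.lift fun i => if h : (i : ℕ) < n - 1 then of (⟨i, h⟩ : Fin (n - 1)) else 1

/-- The inclusion `F_{n-1} → F_n`. -/
def castHom (n : ℕ) : FG (n - 1) →* FG n :=
  FreeGroup.lift fun i => of (Fin.castLE (Nat.sub_le n 1) i)

/-- The endomorphism of `F_{n-1}` induced by an automorphism of `F_n`. -/
def desc (n : ℕ) (φ : MulAut (FG n)) : FG (n - 1) →* FG (n - 1) :=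
  (projHom n).comp ((φ : FG n ≃* FG n).toMonoidHom.comp (castHom n))

lemma desc_proj {n : ℕ} {φ : MulAut (FG n)} (hφ : φ ∈ PSigmaAut n) (x : FG n) :
    desc n φ (projHom n x) = projHom n (φ x) := by
  have : (desc n φ).comp (projHom n) = (projHom n).comp (φ : FG n ≃* FG n).toMonoidHom := by
    apply FreeGroup.ext_hom
    intro i
    by_cases h : (i : ℕ) < n - 1
    · simp only [MonoidHom.comp_apply, projHom, FreeGroup.lift_apply_of, dif_pos h]
      simp only [desc, MonoidHom.comp_apply, castHom, FreeGroup.lift_apply_of]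
      congr 2
    · obtain ⟨w, hw⟩ := hφ i
      simp only [MonoidHom.comp_apply, projHom, FreeGroup.lift_apply_of, dif_neg h,
        MulEquiv.coe_toMonoidHom, hw, _root_.map_mul, _root_.map_inv, _root_.map_one]
      simp
  exact DFunLike.congr_fun this x

lemma desc_mul {n : ℕ} {φ : MulAut (FG n)} (hφ : φ ∈ PSigmaAut n) (ψ : MulAut (FG n)) :
    desc n (φ * ψ) = (desc n φ).comp (desc n ψ) := by
  apply FreeGroup.ext_hom
  intro i
  simp only [desc, MonoidHom.comp_apply, MulEquiv.coe_toMonoidHom, MulAut.mul_apply]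
  exact (desc_proj hφ _).symm

lemma desc_one (n : ℕ) : desc n 1 = MonoidHom.id (FG (n - 1)) := by
  apply FreeGroup.ext_hom
  intro i
  simp only [desc, MonoidHom.comp_apply, MulEquiv.coe_toMonoidHom, MulAut.one_apply,
    castHom, FreeGroup.lift_apply_of, projHom, MonoidHom.id_apply]
  rw [dif_pos (show ((Fin.castLE (Nat.sub_le n 1) i : Fin n) : ℕ) < n - 1 from i.isLt)]
  exact congrArg of (Fin.ext rfl)

/-- The automorphism of `F_{n-1}` induced by an element of `PΣ_n`. -/
def descAut (n : ℕ) (φ : PSigmaAut n) : MulAut (FG (n - 1)) :=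
  MonoidHom.toMulEquiv (desc n ↑φ) (desc n ↑(φ⁻¹))
    (by
      rw [← desc_mul (φ⁻¹).2 ↑φ]
      norm_num [desc_one])
    (by
      rw [← desc_mul φ.2 ↑(φ⁻¹)]
      norm_num [desc_one])

lemma descAut_mem (n : ℕ) (φ : PSigmaAut n) : descAut n φ ∈ PSigmaAut (n - 1) := by
  intro i
  obtain ⟨w, hw⟩ := φ.2 (Fin.castLE (Nat.sub_le n 1) i)
  refine ⟨projHom n w, ?_⟩
  have : descAut n φ (of i) = projHom n ((φ : MulAut (FG n)) (of (Fin.castLE (Nat.sub_le n 1) i))) := by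
    simp only [descAut, MonoidHom.toMulEquiv, MulEquiv.coe_mk, Equiv.coe_fn_mk, desc,
      MonoidHom.comp_apply, MulEquiv.coe_toMonoidHom, castHom, FreeGroup.lift_apply_of]
  rw [this, hw]
  simp only [_root_.map_mul, _root_.map_inv, projHom, FreeGroup.lift_apply_of]
  rw [dif_pos (show ((Fin.castLE (Nat.sub_le n 1) i : Fin n) : ℕ) < n - 1 from i.isLt)]
  congr 2

/-- The homomorphism `π_n : PΣ_n → PΣ_{n-1}` induced by killing the last generator. -/
def piHom (n : ℕ) : PSigmaAut n →* PSigmaAut (n - 1) :=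
  MonoidHom.mk' (fun φ => ⟨descAut n φ, descAut_mem n φ⟩)
    (by
      intro φ ψ
      refine Subtype.ext (MulEquiv.ext fun x => ?_)
      show desc n ↑(φ * ψ) x = (descAut n φ * descAut n ψ) x
      rw [MulAut.mul_apply]
      show _ = desc n ↑φ (desc n ↑ψ x)
      rw [Subgroup.coe_mul, desc_mul φ.2]
      rfl)

/-- The kernel `K_n` of `π_n : PΣ_n → PΣ_{n-1}`. -/
def Kn (n : ℕ) : Subgroup (PSigmaAut n) := (piHom n).ker

/-- The monoid hom underlying `α_{ij}`: sends `x_i ↦ x_j x_i x_j⁻¹` and fixes the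
other generators. -/
def alphaHom (n : ℕ) (i j : Fin n) : FG n →* FG n :=
  FreeGroup.lift fun r => if r = i then of j * of i * (of j)⁻¹ else of r

/-- The inverse of `alphaHom`. -/
def alphaInvHom (n : ℕ) (i j : Fin n) : FG n →* FG n :=
  FreeGroup.lift fun r => if r = i then (of j)⁻¹ * of i * of j else of r

/-- The McCool generator `α_{ij} ∈ Aut(F_n)`, sending `x_i ↦ x_j x_i x_j⁻¹` and fixing
the other generators (defined to be the identity if `i = j`). -/
def alphaAut (n : ℕ) (i j : Fin n) : MulAut (FG n) :=
  if h : i = j then 1 else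
    MonoidHom.toMulEquiv (alphaHom n i j) (alphaInvHom n i j)
      (by
        apply FreeGroup.ext_hom
        intro r
        by_cases hr : r = i
        · subst hr
          simp [alphaHom, alphaInvHom, Ne.symm h, mul_assoc]
        · simp [alphaHom, alphaInvHom, hr])
      (by
        apply FreeGroup.ext_hom
        intro r
        by_cases hr : r = i
        · subst hr
          simp [alphaHom, alphaInvHom, Ne.symm h, mul_assoc]
        · simp [alphaHom, alphaInvHom, hr])

lemma alphaAut_apply_of (n : ℕ) {i j : Fin n} (hij : i ≠ j) (r : Fin n) :
    alphaAut n i j (of r) = if r = i then of j * of i * (of j)⁻¹ else of r := by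
  simp only [alphaAut, dif_neg hij]
  show alphaHom n i j (of r) = _
  simp [alphaHom]

lemma alphaAut_mem (n : ℕ) (i j : Fin n) : alphaAut n i j ∈ PSigmaAut n := by
  by_cases h : i = j
  · simp only [alphaAut, dif_pos h]
    exact (PSigmaAut n).one_mem
  · intro r
    rw [alphaAut_apply_of n h r]
    by_cases hr : r = i
    · subst hr
      exact ⟨of j, by simp⟩
    · exact ⟨1, by simp [hr]⟩

/-- `α_{ij}` as an element of `PΣ_n`. -/
def alphaP (n : ℕ) (i j : Fin n) : PSigmaAut n := ⟨alphaAut n i j, alphaAut_mem n i j⟩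

/-!
Among all choices of conjugators `φ(x_i) = W_i x_i W_i⁻¹` of a pure symmetric automorphism `φ`,
descend on the total length of the `W_i`. If `W_i` ends in a power of `x_i`, that power can be
dropped; if `W_i` starts with a reduced word `W_j x_j^{±1}`, composing `φ` with a power of `α_{ij}`
shortens `W_i`. When neither happens, the branches of the Cayley tree leaving `W_i` along `x_i` and
`x_i⁻¹` are disjoint and contain neither `1` nor any `W_j`; ping-pong on them forces `φ = 1`. So the
`α_{ij}` generate `PΣ_n`.

McCool's relations `[α_{ij}, α_{kl}] = 1`, `[α_{ij}, α_{kj}] = 1` and `[α_{ij}, α_{ik} α_{jk}] = 1`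
show that the `α_{ij}` with `i, j ≠ n` normalize `L = ⟨α_{in}, α_{ni}⟩`. Hence `PΣ_n = L S`, where
`S` is generated by these `α_{ij}`. The projection `π_n` kills `L` and is injective on `S`, so its
kernel is `L`.
-/

section Branches

variable {α : Type*} [DecidableEq α] {v w x : FreeGroup α} {c d : α × Bool}

/-- The branch at the vertex `v` of the Cayley tree in the direction of the letter `c`: the vertices
whose geodesic from `v` starts with the edge labelled `c`. -/
def branch (v : FreeGroup α) (c : α × Bool) : Set (FreeGroup α) :=
  {w | v⁻¹ * w ∈ startsWith c}

lemma self_notMem_branch : v ∉ branch v c := by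
  simp [branch, startsWith]

lemma conj_mul_mem_branch (h : w ∉ branch v (c.1, !c.2)) :
    v * mk [c] * v⁻¹ * w ∈ branch v c := by
  simpa [branch, mul_assoc] using startsWith_mk_mul _ h

lemma exists_toWord_eq_cons_of_mem_startsWith (h : w ∈ startsWith c) :
    ∃ L, w.toWord = c :: L := by
  cases hw : w.toWord with
  | nil => simp [startsWith, hw] at h
  | cons d L => exact ⟨L, by simpa [startsWith, hw] using h⟩

lemma norm_inv_mk_mul_lt_of_mem_startsWith (h : w ∈ startsWith c) :
    norm ((mk [c])⁻¹ * w) < norm w := by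
  obtain ⟨L, hL⟩ := exists_toWord_eq_cons_of_mem_startsWith h
  have hw : w = mk [c] * mk L := by rw [mul_mk, ← mk_toWord (x := w), hL]; rfl
  calc norm ((mk [c])⁻¹ * w) = norm (mk L) := by rw [hw, inv_mul_cancel_left]
    _ ≤ L.length := norm_mk_le
    _ < norm w := by simp [FreeGroup.norm, hL]

lemma norm_mul_mk_lt_of_one_mem_branch (h : 1 ∈ branch v c) : norm (v * mk [c]) < norm v := by
  have hv : v⁻¹ ∈ startsWith c := by simpa [branch] using h
  simpa [← norm_inv_eq (x := v * mk [c])] using norm_inv_mk_mul_lt_of_mem_startsWith hv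

lemma isReduced_toWord_append_of_one_notMem_branch (h : 1 ∉ branch v c) :
    IsReduced (v.toWord ++ [c]) := by
  refine List.isChain_append.2 ⟨isReduced_toWord, IsReduced.singleton, ?_⟩
  rintro ⟨i, b⟩ hlast _ ⟨⟩ hi
  by_contra hb
  obtain rfl : c = (i, !b) := Prod.ext hi.symm (Bool.eq_not.2 (Ne.symm hb))
  rw [Option.mem_def] at hlast
  refine h ?_
  simp [branch, startsWith, toWord_inv, invRev, ← List.head?_eq_getElem?, hlast]

lemma toWord_eq_append_of_mem_branch (h : 1 ∉ branch v c) (hw : w ∈ branch v c) :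
    w.toWord = v.toWord ++ (v⁻¹ * w).toWord := by
  obtain ⟨L, hL⟩ := exists_toWord_eq_cons_of_mem_startsWith hw
  have hred : IsReduced (v.toWord ++ [c] ++ L) :=
    (isReduced_toWord_append_of_one_notMem_branch h).append_overlap
      (by simpa [hL] using isReduced_toWord (x := v⁻¹ * w)) (List.cons_ne_nil _ _)
  calc w.toWord = (v * (v⁻¹ * w)).toWord := by rw [mul_inv_cancel_left]
    _ = reduce (v.toWord ++ (v⁻¹ * w).toWord) := toWord_mul _ _
    _ = v.toWord ++ (v⁻¹ * w).toWord := by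
      rw [hL]; exact IsReduced.reduce_eq (by simpa using hred)

lemma mem_branch_iff_isPrefix (h : 1 ∉ branch v c) :
    w ∈ branch v c ↔ v.toWord ++ [c] <+: w.toWord := by
  constructor
  · intro hw
    obtain ⟨L, hL⟩ := exists_toWord_eq_cons_of_mem_startsWith hw
    exact ⟨L, by rw [toWord_eq_append_of_mem_branch h hw, hL]; simp⟩
  · rintro ⟨L, hL⟩
    have hred : IsReduced (v.toWord ++ c :: L) := by
      simpa [← hL] using isReduced_toWord (x := w)
    have hcL : IsReduced (c :: L) := hred.right_of_append
    have hw : v⁻¹ * w = mk (c :: L) := by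
      rw [inv_mul_eq_iff_eq_mul, ← mk_toWord (x := w), ← hL, List.append_assoc, ← mul_mk,
        mk_toWord]
      rfl
    simp [branch, startsWith, hw, hcL.reduce_eq]

lemma norm_conj_mul_lt_of_mem_branch (h : 1 ∉ branch v c) (hw : w ∈ branch v c) :
    norm (v * (mk [c])⁻¹ * v⁻¹ * w) < norm w :=
  calc norm (v * (mk [c])⁻¹ * v⁻¹ * w) = norm (v * ((mk [c])⁻¹ * (v⁻¹ * w))) := by
        simp only [mul_assoc]
    _ ≤ norm v + norm ((mk [c])⁻¹ * (v⁻¹ * w)) := norm_mul_le _ _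
    _ < norm v + norm (v⁻¹ * w) :=
        Nat.add_lt_add_left (norm_inv_mk_mul_lt_of_mem_startsWith hw) _
    _ = norm w := by simp [FreeGroup.norm, toWord_eq_append_of_mem_branch h hw]

lemma eq_of_mem_branch_of_mem_branch (hv : 1 ∉ branch v c) (hw : 1 ∉ branch w d)
    (hwv : w ∉ branch v c) (hle : norm v ≤ norm w) (hxv : x ∈ branch v c)
    (hxw : x ∈ branch w d) : c = d := by
  have hpre : v.toWord ++ [c] <+: w.toWord ++ [d] :=
    List.prefix_of_prefix_length_le ((mem_branch_iff_isPrefix hv).1 hxv)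
      ((mem_branch_iff_isPrefix hw).1 hxw) (by simpa [FreeGroup.norm] using hle)
  rcases List.prefix_concat_iff.1 hpre with heq | hlt
  · simpa using (List.append_inj' heq rfl).2
  · exact absurd ((mem_branch_iff_isPrefix hv).2 hlt) hwv

lemma disjoint_branch (hv : 1 ∉ branch v c) (hw : 1 ∉ branch w d) (hwv : w ∉ branch v c)
    (hvw : v ∉ branch w d) (hcd : c ≠ d) : Disjoint (branch v c) (branch w d) := by
  refine Set.disjoint_left.2 fun x hxv hxw => hcd ?_
  rcases le_total (norm v) (norm w) with hle | hle
  · exact eq_of_mem_branch_of_mem_branch hv hw hwv hle hxv hxw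
  · exact (eq_of_mem_branch_of_mem_branch hw hv hvw hle hxw hxv).symm

theorem smul_mem_of_ping_pong {G X : Type*} [Monoid G] [MulAction G X] (f : FreeGroup α →* G)
    {P : α × Bool → Set X} (hdisj : Pairwise fun c d => Disjoint (P c) (P d))
    (hf : ∀ c, ∀ x ∉ P (c.1, !c.2), f (mk [c]) • x ∈ P c) {x : X} (hx : ∀ c, x ∉ P c)
    (hw : w ∈ startsWith c) : f w • x ∈ P c := by
  have hlist : ∀ (L : List (α × Bool)) (c), IsReduced (c :: L) → f (mk (c :: L)) • x ∈ P c := by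
    intro L
    induction L with
    | nil => exact fun c _ => hf c x (hx _)
    | cons d L ih =>
      intro c hred
      rw [isReduced_cons_cons] at hred
      have hd : f (mk (d :: L)) • x ∉ P (c.1, !c.2) := by
        refine Set.disjoint_left.1 (hdisj ?_) (ih d hred.2)
        rintro rfl
        simp at hred
      have hmul : mk (c :: d :: L) = mk [c] * mk (d :: L) := by rw [mul_mk]; rfl
      rw [hmul, _root_.map_mul, mul_smul]
      exact hf c _ hd
  obtain ⟨L, hL⟩ := exists_toWord_eq_cons_of_mem_startsWith hw
  rw [← mk_toWord (x := w), hL]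
  exact hlist L c (hL ▸ isReduced_toWord)

end Branches

lemma sum_norm_lt_sum_norm {ι α : Type*} [Fintype ι] [DecidableEq α] {V W : ι → FreeGroup α} {i : ι}
    (hi : norm (V i) < norm (W i)) (hne : ∀ r ≠ i, V r = W r) :
    ∑ r, norm (V r) < ∑ r, norm (W r) := by
  refine Finset.sum_lt_sum (fun r _ => ?_) ⟨i, Finset.mem_univ i, hi⟩
  obtain rfl | hr := eq_or_ne r i
  · exact hi.le
  · rw [hne r hr]

lemma mulAut_ext_of {α : Type*} {φ ψ : MulAut (FreeGroup α)} (h : ∀ i, φ (of i) = ψ (of i)) :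
    φ = ψ :=
  MulEquiv.toMonoidHom_injective (FreeGroup.ext_hom _ _ h)

/-- `W` is a choice of conjugators for the pure symmetric automorphism `φ`. The word `W i` is
determined by `φ` only up to right multiplication by powers of `x_i`. -/
def IsConjugatorFamily {α : Type*} (φ : MulAut (FreeGroup α)) (W : α → FreeGroup α) : Prop :=
  ∀ i, φ (of i) = W i * of i * (W i)⁻¹

namespace IsConjugatorFamily

variable {α : Type*} {φ ψ : MulAut (FreeGroup α)} {V W : α → FreeGroup α}

lemma mul (hφ : IsConjugatorFamily φ W) (hψ : IsConjugatorFamily ψ V) :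
    IsConjugatorFamily (φ * ψ) fun i => φ (V i) * W i := by
  intro i
  rw [MulAut.mul_apply, hψ i, _root_.map_mul, _root_.map_mul, _root_.map_inv, hφ i]
  group

lemma apply_mk_singleton (hφ : IsConjugatorFamily φ W) (c : α × Bool) :
    φ (mk [c]) = W c.1 * mk [c] * (W c.1)⁻¹ := by
  rcases c with ⟨i, _ | _⟩
  · have hi : mk [(i, false)] = (of i)⁻¹ := rfl
    rw [hi, _root_.map_inv, hφ i]
    group
  · exact hφ i

variable [DecidableEq α]

lemma update_mul_mk_singleton (hφ : IsConjugatorFamily φ W) (c : α × Bool) :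
    IsConjugatorFamily φ (Function.update W c.1 (W c.1 * mk [c])) := by
  intro i
  obtain rfl | hi := eq_or_ne i c.1
  · have hcomm : Commute (mk [c]) (of c.1) := by
      rcases c with ⟨i, _ | _⟩
      · exact (Commute.refl (of i)).inv_left
      · exact Commute.refl (of i)
    rw [Function.update_self, hφ]
    nth_rw 1 [← hcomm.mul_inv_cancel]
    group
  · rw [Function.update_of_ne hi, hφ i]

/-- If the reduced word of `φ⁻¹ x_k` starts with the letter `c`, ping-pong puts `x_k` into the
branch at `W c.1` in the direction `c`. As `x_k` has length one, this is only possible if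
`W c.1 = 1` and `c` is the letter `x_k`, so that `W k = 1`. -/
theorem eq_one_of_forall_notMem_branch (hφ : IsConjugatorFamily φ W)
    (hone : ∀ c, 1 ∉ branch (W c.1) c) (hW : ∀ c i, W i ∉ branch (W c.1) c) : φ = 1 := by
  have hdisj : Pairwise fun c d => Disjoint (branch (W c.1) c) (branch (W d.1) d) :=
    fun c d hcd => disjoint_branch (hone c) (hone d) (hW c d.1) (hW d c.1) hcd
  have hstep : ∀ c, ∀ x ∉ branch (W c.1) (c.1, !c.2),
      φ.toMonoidHom (mk [c]) • x ∈ branch (W c.1) c := by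
    intro c x hx
    rw [MulEquiv.toMonoidHom_eq_coe, MonoidHom.coe_coe, hφ.apply_mk_singleton, smul_eq_mul]
    exact conj_mul_mem_branch hx
  have htrivial : ∀ k, W k = 1 := by
    intro k
    obtain ⟨c, hc⟩ : ∃ c, φ⁻¹ (of k) ∈ startsWith c := by
      obtain ⟨c, L, hL⟩ := List.exists_cons_of_ne_nil
        (toWord_eq_nil_iff.not.2 ((map_ne_one_iff φ⁻¹ φ⁻¹.injective).2 (of_ne_one k)))
      exact ⟨c, congrArg (·[0]?) hL⟩
    have hk : of k ∈ branch (W c.1) c := by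
      simpa using smul_mem_of_ping_pong φ.toMonoidHom hdisj hstep hone hc
    have hpre := (mem_branch_iff_isPrefix (hone c)).1 hk
    have hWc : (W c.1).toWord = [] := by simpa using hpre.length_le
    obtain rfl : c = (k, true) := by simpa [hWc] using hpre
    exact toWord_eq_nil_iff.1 hWc
  exact mulAut_ext_of fun i => by simp [hφ i, htrivial i]

theorem mem_of_forall_exists_mem [Finite α] {S : Subgroup (MulAut (FreeGroup α))}
    (hS : ∀ i (c : α × Bool), i ≠ c.1 →
      ∃ γ ∈ S, IsConjugatorFamily γ (Pi.mulSingle i (mk [c])⁻¹))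
    (hφ : IsConjugatorFamily φ W) : φ ∈ S := by
  cases nonempty_fintype α
  induction hN : ∑ i, norm (W i) using Nat.strong_induction_on generalizing φ W with
  | _ N ih =>
  subst hN
  by_cases hone : ∀ c, 1 ∉ branch (W c.1) c
  · by_cases hW : ∀ c i, W i ∉ branch (W c.1) c
    · exact hφ.eq_one_of_forall_notMem_branch hone hW ▸ S.one_mem
    · push Not at hW
      obtain ⟨c, i, hi⟩ := hW
      obtain ⟨γ, hγS, hγ⟩ := hS i c (by rintro rfl; exact self_notMem_branch hi)
      refine (S.mul_mem_cancel_right hγS).1 (ih _ ?_ (hφ.mul hγ) rfl)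
      refine sum_norm_lt_sum_norm (i := i) ?_ fun r hr => by simp [hr]
      have hconj : φ (mk [c])⁻¹ = W c.1 * (mk [c])⁻¹ * (W c.1)⁻¹ := by
        rw [_root_.map_inv, hφ.apply_mk_singleton]
        group
      rw [Pi.mulSingle_eq_same, hconj]
      exact norm_conj_mul_lt_of_mem_branch (hone c) hi
  · push Not at hone
    obtain ⟨c, hc⟩ := hone
    refine ih _ ?_ (hφ.update_mul_mk_singleton c) rfl
    exact sum_norm_lt_sum_norm (i := c.1) (by simpa using norm_mul_mk_lt_of_one_mem_branch hc)
      fun r hr => Function.update_of_ne hr _ _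

end IsConjugatorFamily

section Generators

variable {n : ℕ} {i j : Fin n}

lemma isConjugatorFamily_alphaAut (hij : i ≠ j) :
    IsConjugatorFamily (alphaAut n i j) (Pi.mulSingle i (of j)) := by
  intro r
  rw [alphaAut_apply_of n hij]
  obtain rfl | hr := eq_or_ne r i
  · simp
  · simp [hr]

lemma isConjugatorFamily_alphaAut_inv (hij : i ≠ j) :
    IsConjugatorFamily (alphaAut n i j)⁻¹ (Pi.mulSingle i (of j)⁻¹) := by
  intro r
  apply (alphaAut n i j).injective
  obtain rfl | hr := eq_or_ne r i
  · simp [alphaAut_apply_of n hij, hij.symm, mul_assoc]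
  · simp [alphaAut_apply_of n hij, hr]

/-- The generators `α_{ij}` of `PΣ_n`. -/
def alphas (n : ℕ) : Set (MulAut (FG n)) :=
  {g | ∃ i j, i ≠ j ∧ g = alphaAut n i j}

theorem closure_alphas (n : ℕ) : Subgroup.closure (alphas n) = PSigmaAut n := by
  apply le_antisymm
  · rw [Subgroup.closure_le]
    rintro _ ⟨i, j, -, rfl⟩
    exact alphaAut_mem n i j
  · intro φ hφ
    choose W hW using hφ
    refine IsConjugatorFamily.mem_of_forall_exists_mem (fun i c hic => ?_) hW
    have hmem : alphaAut n i c.1 ∈ Subgroup.closure (alphas n) :=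
      Subgroup.subset_closure ⟨i, c.1, hic, rfl⟩
    rcases c with ⟨j, _ | _⟩
    · exact ⟨_, hmem, by simpa [inv_mk, invRev] using! isConjugatorFamily_alphaAut hic⟩
    · exact ⟨_, inv_mem hmem, isConjugatorFamily_alphaAut_inv hic⟩

/-- The generators `α_{im}` and `α_{mi}` of `PΣ_n` which involve the index `m`. -/
def alphasAt (m : Fin n) : Set (MulAut (FG n)) :=
  {g | ∃ i, i ≠ m ∧ (g = alphaAut n i m ∨ g = alphaAut n m i)}

/-- The generators `α_{ij}` of `PΣ_n` which do not involve the index `m`. -/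
def alphasAvoiding (m : Fin n) : Set (MulAut (FG n)) :=
  {g | ∃ i j, i ≠ j ∧ i ≠ m ∧ j ≠ m ∧ g = alphaAut n i j}

lemma alphasAt_union_alphasAvoiding (m : Fin n) :
    alphasAt m ∪ alphasAvoiding m = alphas n := by
  ext g
  constructor
  · rintro (⟨i, hi, rfl | rfl⟩ | ⟨i, j, hij, -, -, rfl⟩)
    exacts [⟨i, m, hi, rfl⟩, ⟨m, i, hi.symm, rfl⟩, ⟨i, j, hij, rfl⟩]
  · rintro ⟨i, j, hij, rfl⟩
    obtain rfl | hi := eq_or_ne i m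
    · exact Or.inl ⟨j, hij.symm, Or.inr rfl⟩
    obtain rfl | hj := eq_or_ne j m
    · exact Or.inl ⟨i, hij, Or.inl rfl⟩
    · exact Or.inr ⟨i, j, hij, hi, hj, rfl⟩

end Generators

section Normalizer

variable {G : Type*} [Group G]

/-- The elements whose conjugates by `g` and by `g⁻¹` both lie in `L`. -/
def conjStable (L : Subgroup G) (g : G) : Subgroup G :=
  L.comap (MulAut.conj g).toMonoidHom ⊓ L.comap (MulAut.conj g⁻¹).toMonoidHom

variable {L : Subgroup G} {b g x : G}

lemma mem_conjStable : x ∈ conjStable L g ↔ g * x * g⁻¹ ∈ L ∧ g⁻¹ * x * g ∈ L := by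
  simp [conjStable, Subgroup.mem_inf]

lemma mem_normalizer_of_le_conjStable (h : L ≤ conjStable L g) :
    g ∈ Subgroup.normalizer (L : Set G) := by
  refine Subgroup.mem_normalizer_iff.2 fun x =>
    ⟨fun hx => (mem_conjStable.1 (h hx)).1, fun hx => ?_⟩
  simpa [mul_assoc] using (mem_conjStable.1 (h hx)).2

lemma conj_eq_of_commute_mul (hgb : Commute g b) (hx : Commute (g * b) x) :
    g * x * g⁻¹ = b⁻¹ * x * b :=
  calc g * x * g⁻¹ = b⁻¹ * (g * b * x) * g⁻¹ := by rw [hgb.eq]; group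
    _ = b⁻¹ * x * (b * g) * g⁻¹ := by rw [hx.eq, hgb.eq]; group
    _ = b⁻¹ * x * b := by group

lemma mem_conjStable_of_commute_mul (hb : b ∈ L) (hxL : x ∈ L) (hgb : Commute g b)
    (hx : Commute (g * b) x) : x ∈ conjStable L g := by
  have hx' : Commute (g⁻¹ * b⁻¹) x := by
    rw [← mul_inv_rev, ← hgb.eq]
    exact hx.inv_left
  have hinv := conj_eq_of_commute_mul hgb.inv_inv hx'
  rw [inv_inv, inv_inv] at hinv
  rw [mem_conjStable, conj_eq_of_commute_mul hgb hx, hinv]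
  exact ⟨mul_mem (mul_mem (inv_mem hb) hxL) hb, mul_mem (mul_mem hb hxL) (inv_mem hb)⟩

lemma mem_conjStable_of_commute (hxL : x ∈ L) (hx : Commute g x) : x ∈ conjStable L g :=
  mem_conjStable_of_commute_mul (one_mem L) hxL (Commute.one_right g) (by rwa [mul_one])

end Normalizer

section Relations

variable {n : ℕ} {i j k l m : Fin n}

lemma commute_alphaAut (hij : i ≠ j) (hkl : k ≠ l) (hik : i ≠ k) (hil : i ≠ l) (hjk : j ≠ k) :
    Commute (alphaAut n i j) (alphaAut n k l) := by
  refine mulAut_ext_of fun r => ?_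
  obtain rfl | hri := eq_or_ne r i
  · simp [alphaAut_apply_of n hij, alphaAut_apply_of n hkl, hik, hjk]
  obtain rfl | hrk := eq_or_ne r k
  · simp [alphaAut_apply_of n hij, alphaAut_apply_of n hkl, hri, hil.symm]
  · simp [alphaAut_apply_of n hij, alphaAut_apply_of n hkl, hri, hrk]

lemma commute_alphaAut_mul (hij : i ≠ j) (hik : i ≠ k) (hjk : j ≠ k) :
    Commute (alphaAut n i j) (alphaAut n i k * alphaAut n j k) := by
  refine mulAut_ext_of fun r => ?_
  obtain rfl | hri := eq_or_ne r i
  · simp [alphaAut_apply_of n hij, alphaAut_apply_of n hik, alphaAut_apply_of n hjk, hij,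
      hij.symm, hik.symm, mul_assoc]
  obtain rfl | hrj := eq_or_ne r j
  · simp [alphaAut_apply_of n hij, alphaAut_apply_of n hik, alphaAut_apply_of n hjk, hij.symm,
      hik.symm, mul_assoc]
  · simp [alphaAut_apply_of n hij, alphaAut_apply_of n hik, alphaAut_apply_of n hjk, hri, hrj]

theorem alphaAut_mem_normalizer (hij : i ≠ j) (him : i ≠ m) (hjm : j ≠ m) :
    alphaAut n i j ∈ Subgroup.normalizer (Subgroup.closure (alphasAt m) : Set (MulAut (FG n))) := by
  have hto : ∀ k ≠ m, alphaAut n k m ∈ Subgroup.closure (alphasAt m) :=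
    fun k hk => Subgroup.subset_closure ⟨k, hk, Or.inl rfl⟩
  have hfrom : ∀ k ≠ m, alphaAut n m k ∈ Subgroup.closure (alphasAt m) :=
    fun k hk => Subgroup.subset_closure ⟨k, hk, Or.inr rfl⟩
  have hmj : Commute (alphaAut n i j) (alphaAut n m j) := commute_alphaAut hij hjm.symm him hij hjm
  have him_mem : alphaAut n i m ∈ conjStable (Subgroup.closure (alphasAt m)) (alphaAut n i j) :=
    mem_conjStable_of_commute_mul (hfrom j hjm) (hto i him) hmj
      (commute_alphaAut_mul him hij hjm.symm).symm
  apply mem_normalizer_of_le_conjStable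
  rw [Subgroup.closure_le]
  rintro _ ⟨k, hk, rfl | rfl⟩
  · obtain rfl | hki := eq_or_ne k i
    · exact him_mem
    obtain rfl | hkj := eq_or_ne k j
    · exact (Subgroup.mul_mem_cancel_left _ him_mem).1 <|
        mem_conjStable_of_commute (mul_mem (hto i him) (hto k hk))
          (commute_alphaAut_mul hij him hjm)
    · exact mem_conjStable_of_commute (hto k hk) (commute_alphaAut hij hk hki.symm him hkj.symm)
  · obtain rfl | hki := eq_or_ne k i
    · refine mem_conjStable_of_commute_mul (hfrom j hjm) (hfrom k hk) hmj ?_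
      rw [hmj.eq]
      exact (commute_alphaAut_mul hk.symm hjm.symm hij).symm
    · exact mem_conjStable_of_commute (hfrom k hk) (commute_alphaAut hij hk.symm him hki.symm hjm)

lemma closure_alphasAvoiding_le_normalizer (m : Fin n) :
    Subgroup.closure (alphasAvoiding m) ≤
      Subgroup.normalizer (Subgroup.closure (alphasAt m) : Set (MulAut (FG n))) := by
  rw [Subgroup.closure_le]
  rintro _ ⟨i, j, hij, him, hjm, rfl⟩
  exact alphaAut_mem_normalizer hij him hjm

end Relations

section Erase

variable {α : Type*} [DecidableEq α] {m r : α}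

/-- The endomorphism of the free group killing the generator `m` and fixing the others. It plays the
role of the projection `F_n → F_{n-1}`, followed by the inclusion `F_{n-1} → F_n`. -/
def eraseHom (m : α) : FreeGroup α →* FreeGroup α :=
  FreeGroup.lift (Function.update of m 1)

@[simp]
lemma eraseHom_of_self (m : α) : eraseHom m (of m) = 1 := by
  simp [eraseHom]

lemma eraseHom_of_ne (h : r ≠ m) : eraseHom m (of r) = of r := by
  simp [eraseHom, h]

/-- The automorphisms which become trivial once the generator `m` is killed. -/
def eraseStabilizer (m : α) : Subgroup (MulAut (FreeGroup α)) where
  carrier := {φ | ∀ x, eraseHom m (φ x) = eraseHom m x}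
  one_mem' _ := rfl
  mul_mem' hφ hψ x := (hφ _).trans (hψ x)
  inv_mem' {φ} hφ x := by simpa using (hφ (φ⁻¹ x)).symm

lemma mem_eraseStabilizer {φ : MulAut (FreeGroup α)} :
    φ ∈ eraseStabilizer m ↔ ∀ x, eraseHom m (φ x) = eraseHom m x :=
  Iff.rfl

lemma mem_eraseStabilizer_of_forall_of {φ : MulAut (FreeGroup α)}
    (h : ∀ r, eraseHom m (φ (of r)) = eraseHom m (of r)) : φ ∈ eraseStabilizer m :=
  DFunLike.congr_fun (FreeGroup.ext_hom ((eraseHom m).comp φ.toMonoidHom) (eraseHom m) h)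

end Erase

section Kernel

variable {n : ℕ} {m : Fin n}

lemma closure_alphasAt_le_eraseStabilizer (m : Fin n) :
    Subgroup.closure (alphasAt m) ≤ eraseStabilizer m := by
  rw [Subgroup.closure_le]
  rintro _ ⟨i, hi, rfl | rfl⟩ <;> refine mem_eraseStabilizer_of_forall_of fun r => ?_
  · rw [alphaAut_apply_of n hi]
    split_ifs with hr <;> simp [hr]
  · rw [alphaAut_apply_of n hi.symm]
    split_ifs with hr <;> simp [hr]

lemma apply_of_self_of_mem_closure_alphasAvoiding {s : MulAut (FG n)}
    (hs : s ∈ Subgroup.closure (alphasAvoiding m)) : s (of m) = of m := by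
  suffices Subgroup.closure (alphasAvoiding m) ≤ MulAction.stabilizer (MulAut (FG n)) (of m) from
    this hs
  rw [Subgroup.closure_le]
  rintro _ ⟨i, j, hij, him, -, rfl⟩
  exact (alphaAut_apply_of n hij m).trans (if_neg him.symm)

lemma apply_eraseHom_of_mem_closure_alphasAvoiding {s : MulAut (FG n)}
    (hs : s ∈ Subgroup.closure (alphasAvoiding m)) (x : FG n) :
    s (eraseHom m x) = eraseHom m (s x) := by
  induction hs using Subgroup.closure_induction generalizing x with
  | mem s hs =>
    obtain ⟨i, j, hij, him, hjm, rfl⟩ := hs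
    refine DFunLike.congr_fun (FreeGroup.ext_hom ((alphaAut n i j).toMonoidHom.comp (eraseHom m))
      ((eraseHom m).comp (alphaAut n i j).toMonoidHom) fun r => ?_) x
    obtain rfl | hr := eq_or_ne r m
    · simp [alphaAut_apply_of n hij, him.symm]
    obtain rfl | hri := eq_or_ne r i
    · simp [alphaAut_apply_of n hij, eraseHom_of_ne hr, eraseHom_of_ne hjm]
    · simp [alphaAut_apply_of n hij, eraseHom_of_ne hr, hri]
  | one => rfl
  | mul s t _ _ hs ht => rw [MulAut.mul_apply, ht, hs, MulAut.mul_apply]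
  | inv s _ hs => exact s.injective (by rw [hs, MulAut.apply_inv_self, MulAut.apply_inv_self])

lemma disjoint_closure_alphasAvoiding_eraseStabilizer (m : Fin n) :
    Disjoint (Subgroup.closure (alphasAvoiding m)) (eraseStabilizer m) := by
  refine Subgroup.disjoint_def.2 fun {s} hs hsm => mulAut_ext_of fun r => ?_
  obtain rfl | hr := eq_or_ne r m
  · exact apply_of_self_of_mem_closure_alphasAvoiding hs
  · calc s (of r) = s (eraseHom m (of r)) := by rw [eraseHom_of_ne hr]
      _ = eraseHom m (s (of r)) := apply_eraseHom_of_mem_closure_alphasAvoiding hs _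
      _ = eraseHom m (of r) := hsm _
      _ = of r := eraseHom_of_ne hr

theorem eraseStabilizer_inf_PSigmaAut (m : Fin n) :
    eraseStabilizer m ⊓ PSigmaAut n = Subgroup.closure (alphasAt m) := by
  have hsup : PSigmaAut n =
      Subgroup.closure (alphasAt m) ⊔ Subgroup.closure (alphasAvoiding m) := by
    rw [← Subgroup.closure_union, alphasAt_union_alphasAvoiding, closure_alphas]
  have hker := closure_alphasAt_le_eraseStabilizer m
  refine le_antisymm ?_ (le_inf hker (hsup ▸ le_sup_left))
  intro φ h
  obtain ⟨hφ, hφP⟩ := Subgroup.mem_inf.1 h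
  rw [hsup, ← SetLike.mem_coe, Subgroup.coe_mul_of_right_le_normalizer_left _ _
    (closure_alphasAvoiding_le_normalizer m)] at hφP
  obtain ⟨l, hl, s, hs, rfl⟩ := hφP
  have hs_mem : s ∈ eraseStabilizer m := (Subgroup.mul_mem_cancel_left _ (hker hl)).1 hφ
  have hs_one : s = 1 :=
    Subgroup.disjoint_def.1 (disjoint_closure_alphasAvoiding_eraseStabilizer m) hs hs_mem
  simpa [hs_one] using hl

lemma projHom_castHom (x : FG (n - 1)) : projHom n (castHom n x) = x :=
  DFunLike.congr_fun (desc_one n) x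

lemma castHom_projHom (hm : (m : ℕ) = n - 1) (x : FG n) :
    castHom n (projHom n x) = eraseHom m x := by
  refine DFunLike.congr_fun (FreeGroup.ext_hom ((castHom n).comp (projHom n)) _ fun r => ?_) x
  obtain rfl | hr := eq_or_ne r m
  · simp [projHom, hm]
  · have hlt : (r : ℕ) < n - 1 := by have := Fin.val_ne_of_ne hr; omega
    simp [projHom, castHom, hlt, eraseHom_of_ne hr]

lemma mem_Kn_iff_projHom {φ : PSigmaAut n} :
    φ ∈ Kn n ↔ ∀ x, projHom n ((φ : MulAut (FG n)) x) = projHom n x := by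
  have hdesc : φ ∈ Kn n ↔ ∀ y, desc n φ y = y := by
    rw [Kn, MonoidHom.mem_ker, Subtype.ext_iff]
    exact MulEquiv.ext_iff
  rw [hdesc]
  refine ⟨fun h x => by rw [← desc_proj φ.2, h], fun h y => ?_⟩
  rw [← projHom_castHom y, desc_proj φ.2, h]

lemma Kn_eq_subgroupOf (hm : (m : ℕ) = n - 1) :
    Kn n = (eraseStabilizer m).subgroupOf (PSigmaAut n) := by
  have hinj : Function.Injective (castHom n) := Function.LeftInverse.injective projHom_castHom
  ext φ
  rw [mem_Kn_iff_projHom, Subgroup.mem_subgroupOf, mem_eraseStabilizer]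
  simp only [← castHom_projHom hm, hinj.eq_iff]

lemma exists_castLE_eq (hm : (m : ℕ) = n - 1) {i : Fin n} :
    (∃ k : Fin (n - 1), Fin.castLE (Nat.sub_le n 1) k = i) ↔ i ≠ m := by
  constructor
  · rintro ⟨k, rfl⟩ hk
    exact k.2.ne ((congrArg Fin.val hk).trans hm)
  · intro hi
    have := Fin.val_ne_of_ne hi
    exact ⟨⟨i, by omega⟩, rfl⟩

lemma image_subtype_alphaP (hm : (m : ℕ) = n - 1) :
    (PSigmaAut n).subtype '' {g | ∃ i : Fin (n - 1),
      g = alphaP n (Fin.castLE (Nat.sub_le n 1) i) m ∨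
        g = alphaP n m (Fin.castLE (Nat.sub_le n 1) i)} = alphasAt m := by
  ext g
  constructor
  · rintro ⟨_, ⟨i, rfl | rfl⟩, rfl⟩
    exacts [⟨_, (exists_castLE_eq hm).1 ⟨i, rfl⟩, Or.inl rfl⟩,
      ⟨_, (exists_castLE_eq hm).1 ⟨i, rfl⟩, Or.inr rfl⟩]
  · rintro ⟨i, hi, hg⟩
    obtain ⟨k, rfl⟩ := (exists_castLE_eq hm).2 hi
    rcases hg with rfl | rfl
    exacts [⟨_, ⟨k, Or.inl rfl⟩, rfl⟩, ⟨_, ⟨k, Or.inr rfl⟩, rfl⟩]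

end Kernel

/-- STATEMENT 5: For every `n ≥ 2`, `K_n` is generated by the `2n - 2` elements
`α_{1n}, …, α_{n-1,n}, α_{n1}, …, α_{n,n-1}`. -/
theorem statement5 (n : ℕ) (hn : 2 ≤ n) :
    Kn n = Subgroup.closure {g : PSigmaAut n |
      ∃ i : Fin (n - 1),
        g = alphaP n (Fin.castLE (Nat.sub_le n 1) i) ⟨n - 1, by omega⟩ ∨
          g = alphaP n ⟨n - 1, by omega⟩ (Fin.castLE (Nat.sub_le n 1) i)} := by
  apply Subgroup.map_injective (PSigmaAut n).subtype_injective
  rw [MonoidHom.map_closure, image_subtype_alphaP rfl,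
    Kn_eq_subgroupOf (m := ⟨n - 1, by omega⟩) rfl, Subgroup.subgroupOf_map_subtype,
    eraseStabilizer_inf_PSigmaAut]
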